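/- arXiv:0912.3568 — 2 statements merged into one kernel-verified Lean document; each statement's English description precedes it below -/
import Mathlib

section
/- Let N be a positive integer and let 𝕋_N := ℝ/(2πN·ℤ) carry Lebesgue (Haar) measure. For n ∈ {0, …, 2N−1} let τ_n : L²(𝕋_N; ℂ) → L²(𝕋_N; ℂ) be the (measure-preserving, hence isometric) translation (τ_n h)(x) = h(x + πn), and let ρ : L²(𝕋_N; ℂ) → L²((0, π); ℂ) be the restriction of (a representative of) an L² class to the interval (0, π). Define U : L²(𝕋_N; ℂ) → ⊕_{j=0}^{2N−1} L²((0, π); ℂ) (the Hilbert space direct sum) by (U h)_j := (2N)^{−1/2} · Σ_{n=0}^{2N−1} e^{−iπjn/N} · ρ(τ_n h). Then U is a surjective linear isometry (a unitary operator) from L²(𝕋_N; ℂ) onto ⊕_{j=0}^{2N−1} L²((0, π); ℂ). -/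
open MeasureTheory

lemma aux_ortho (N : ℕ) (hN : 0 < N) (n m : ℕ) (hn : n < 2 * N) (hm : m < 2 * N) :
    ∑ j ∈ Finset.range (2 * N),
      Complex.exp (-(Complex.I * (Real.pi : ℂ) * (j : ℂ) * (n : ℂ)) / (N : ℂ)) *
      (starRingEnd ℂ) (Complex.exp (-(Complex.I * (Real.pi : ℂ) * (j : ℂ) * (m : ℂ)) / (N : ℂ)))
      = if n = m then (2 * N : ℂ) else 0 := by
  have hNc : (N : ℂ) ≠ 0 := by exact_mod_cast hN.ne'
  have hpi : (Real.pi : ℂ) ≠ 0 := by exact_mod_cast Real.pi_ne_zero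
  set r : ℂ := Complex.exp (Complex.I * Real.pi * ((m : ℂ) - n) / N) with hr
  have hterm : ∀ j : ℕ, Complex.exp (-(Complex.I * (Real.pi : ℂ) * (j : ℂ) * (n : ℂ)) / (N : ℂ)) *
      (starRingEnd ℂ) (Complex.exp (-(Complex.I * (Real.pi : ℂ) * (j : ℂ) * (m : ℂ)) / (N : ℂ)))
      = r ^ j := by
    intro j
    rw [← Complex.exp_conj, ← Complex.exp_add, hr, ← Complex.exp_nat_mul]
    congr 1
    simp
    field_simp
    ring
  simp_rw [hterm]
  split_ifs with h
  · subst h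
    simp [hr]
  · have hr1 : r ≠ 1 := by
      rw [hr, Ne, Complex.exp_eq_one_iff]
      rintro ⟨k, hk⟩
      have h1 : ((m : ℂ) - n) = k * (2 * N) := by
        field_simp at hk
        have h2 : (Complex.I * Real.pi) * ((m : ℂ) - n) = (Complex.I * Real.pi) * (k * (2 * N)) := by
          first | linear_combination hk | linear_combination (Complex.I * Real.pi) * hk
        exact mul_left_cancel₀ (mul_ne_zero Complex.I_ne_zero hpi) h2
      have h3 : (m : ℤ) - n = k * (2 * N) := by exact_mod_cast h1
      have hk0 : k = 0 := by
        by_contra hk0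
        have : (2 * N : ℤ) ≤ |k * (2 * N)| := by
          rw [abs_mul, abs_of_nonneg (by positivity : (0 : ℤ) ≤ 2 * N)]
          have : 1 ≤ |k| := Int.one_le_abs hk0
          nlinarith
        rw [← h3] at this
        have h4 : |(m : ℤ) - n| < 2 * N := by rw [abs_lt]; constructor <;> omega
        omega
      subst hk0
      simp at h3
      omega
    rw [geom_sum_eq hr1]
    have : r ^ (2 * N) = 1 := by
      rw [hr, ← Complex.exp_nat_mul, Complex.exp_eq_one_iff]
      refine ⟨(m : ℤ) - n, ?_⟩
      push_cast
      field_simp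
    rw [this]; simp

lemma aux_parseval (N : ℕ) (hN : 0 < N) (v : ℕ → ℂ) :
    ∑ j ∈ Finset.range (2 * N), ‖((Real.sqrt (2 * N))⁻¹ : ℝ) * ∑ n ∈ Finset.range (2 * N),
      Complex.exp (-(Complex.I * (Real.pi : ℂ) * (j : ℂ) * (n : ℂ)) / (N : ℂ)) * v n‖ ^ 2
      = ∑ n ∈ Finset.range (2 * N), ‖v n‖ ^ 2 := by
  have hNc : (N : ℂ) ≠ 0 := by exact_mod_cast hN.ne'
  have hs : (((Real.sqrt (2 * N))⁻¹ : ℝ) : ℂ) * ((Real.sqrt (2 * N))⁻¹ : ℝ) = (2 * N : ℂ)⁻¹ := by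
    rw [← Complex.ofReal_mul, ← mul_inv, Real.mul_self_sqrt (by positivity)]; simp
  apply Complex.ofReal_injective
  push_cast
  simp_rw [← Complex.mul_conj']
  simp only [map_mul, map_sum, map_inv₀, Complex.conj_ofReal]
  set e : ℕ → ℕ → ℂ := fun j n =>
    Complex.exp (-(Complex.I * (Real.pi : ℂ) * (j : ℂ) * (n : ℂ)) / (N : ℂ)) with he
  have : ∀ j, (((Real.sqrt (2 * N))⁻¹ : ℝ) : ℂ) * (∑ n ∈ Finset.range (2 * N), e j n * v n) *
      ((((Real.sqrt (2 * N))⁻¹ : ℝ) : ℂ) * ∑ n ∈ Finset.range (2 * N),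
        (starRingEnd ℂ) (e j n) * (starRingEnd ℂ) (v n))
      = (2 * N : ℂ)⁻¹ * ∑ n ∈ Finset.range (2 * N), ∑ m ∈ Finset.range (2 * N),
        (e j n * (starRingEnd ℂ) (e j m)) * (v n * (starRingEnd ℂ) (v m)) := by
    intro j
    rw [mul_mul_mul_comm, hs, Finset.sum_mul_sum]
    congr 1
    refine Finset.sum_congr rfl fun n _ => Finset.sum_congr rfl fun m _ => by ring
  have h2 := Finset.sum_congr (rfl : Finset.range (2 * N) = _) (fun j _ => this j)
  push_cast at h2 ⊢
  refine h2.trans ?_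
  rw [← Finset.mul_sum, Finset.sum_comm]
  rw [Finset.mul_sum]
  refine Finset.sum_congr rfl fun n hn => ?_
  rw [Finset.sum_comm]
  simp_rw [← Finset.sum_mul]
  have h3 : ∀ m ∈ Finset.range (2 * N), (∑ j ∈ Finset.range (2 * N), e j n * (starRingEnd ℂ) (e j m))
      * (v n * (starRingEnd ℂ) (v m)) =
      if n = m then (2 * N : ℂ) * (v n * (starRingEnd ℂ) (v m)) else 0 := by
    intro m hm
    rw [he, aux_ortho N hN n m (Finset.mem_range.1 hn) (Finset.mem_range.1 hm)]
    split_ifs <;> simp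
  rw [Finset.sum_congr rfl h3, Finset.sum_ite_eq, if_pos hn]
  field_simp

lemma aux_inv (N : ℕ) (hN : 0 < N) (g : ℕ → ℂ) (j : ℕ) (hj : j < 2 * N) :
    ((Real.sqrt (2 * N))⁻¹ : ℝ) * ∑ n ∈ Finset.range (2 * N),
      Complex.exp (-(Complex.I * (Real.pi : ℂ) * (j : ℂ) * (n : ℂ)) / (N : ℂ)) *
      (((Real.sqrt (2 * N))⁻¹ : ℝ) * ∑ k ∈ Finset.range (2 * N), (starRingEnd ℂ)
        (Complex.exp (-(Complex.I * (Real.pi : ℂ) * (k : ℂ) * (n : ℂ)) / (N : ℂ))) * g k)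
      = g j := by
  have hNc : (N : ℂ) ≠ 0 := by exact_mod_cast hN.ne'
  have hs : (((Real.sqrt (2 * N))⁻¹ : ℝ) : ℂ) * ((Real.sqrt (2 * N))⁻¹ : ℝ) = (2 * N : ℂ)⁻¹ := by
    rw [← Complex.ofReal_mul, ← mul_inv, Real.mul_self_sqrt (by positivity)]; simp
  generalize (((Real.sqrt (2 * N))⁻¹ : ℝ) : ℂ) = s at *
  set e : ℕ → ℕ → ℂ := fun j n =>
    Complex.exp (-(Complex.I * (Real.pi : ℂ) * (j : ℂ) * (n : ℂ)) / (N : ℂ)) with he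
  have hsymm : ∀ a b, e a b = e b a := fun a b => by
    simp only [he]; congr 1; ring
  change s * ∑ n ∈ Finset.range (2 * N), e j n * (s * ∑ k ∈ Finset.range (2 * N),
    (starRingEnd ℂ) (e k n) * g k) = g j
  have h1 : s * ∑ n ∈ Finset.range (2 * N), e j n * (s * ∑ k ∈ Finset.range (2 * N),
    (starRingEnd ℂ) (e k n) * g k) = (s * s) * ∑ k ∈ Finset.range (2 * N),
      (∑ n ∈ Finset.range (2 * N), e n j * (starRingEnd ℂ) (e n k)) * g k := by
    simp_rw [Finset.sum_mul]
    rw [Finset.sum_comm (γ := ℕ)]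
    simp_rw [Finset.mul_sum]
    refine Finset.sum_congr rfl fun n _ => Finset.sum_congr rfl fun k _ => ?_
    rw [hsymm n j, hsymm n k]; ring
  rw [h1, hs]
  have h3 : ∀ k ∈ Finset.range (2 * N), (∑ n ∈ Finset.range (2 * N), e n j * (starRingEnd ℂ) (e n k))
      * g k = if j = k then (2 * N : ℂ) * g k else 0 := by
    intro m hm
    rw [he, aux_ortho N hN j m hj (Finset.mem_range.1 hm)]
    split_ifs <;> simp
  rw [Finset.sum_congr rfl h3, Finset.sum_ite_eq, if_pos (Finset.mem_range.2 hj)]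
  field_simp

lemma aux_mp (T : ℝ) [hT : Fact (0 < T)] (c : ℝ) :
    MeasurePreserving (fun x : ℝ => ((x + c : ℝ) : AddCircle T))
      (volume.restrict (Set.Ioc 0 (0 + T))) volume := by
  have h1 := AddCircle.measurePreserving_mk T 0
  have h2 := measurePreserving_add_right (volume : Measure (AddCircle T)) (c : AddCircle T)
  have h3 := h2.comp h1
  exact h3

lemma aux_lift (T : ℝ) [hT : Fact (0 < T)] (H : ℝ → ℂ) (hH : MemLp H 2 volume) :
    MemLp (AddCircle.liftIoc T 0 H) 2 volume := by
  have h1 : MeasurePreserving (AddCircle.measurableEquivIoc T 0).symm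
      (Measure.comap Subtype.val volume) (volume : Measure (AddCircle T)) := by
    have := (AddCircle.measurePreserving_mk T 0).comp
      (measurePreserving_subtype_coe (measurableSet_Ioc (a := (0:ℝ)) (b := 0 + T)))
    exact this
  have h2 := h1.symm
  have h3 : MemLp (H ∘ Subtype.val) 2 (Measure.comap (Subtype.val : Set.Ioc (0:ℝ) (0 + T) → ℝ) volume) :=
    (hH.restrict (Set.Ioc 0 (0 + T))).comp_measurePreserving
      (measurePreserving_subtype_coe measurableSet_Ioc)
  exact h3.comp_measurePreserving h2

lemma aux_integral (N : ℕ) (T : ℝ) [hT : Fact (0 < T)] (hTN : T = Real.pi * ((2 * N : ℕ) : ℝ))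
    (f : AddCircle T → ℝ) (hf : Integrable f) :
    ∫ y, f y = ∑ n ∈ Finset.range (2 * N), ∫ x in Set.Ioo 0 Real.pi,
      f ((x + Real.pi * n : ℝ) : AddCircle T) := by
  have hpi := Real.pi_pos
  have hint : IntegrableOn (fun x : ℝ => f x) (Set.Ioc 0 (0 + T)) :=
    (AddCircle.measurePreserving_mk T 0).integrable_comp_of_integrable hf
  have h := intervalIntegral.sum_integral_adjacent_intervals (μ := volume) (f := fun x : ℝ => f x)
    (a := fun n : ℕ => Real.pi * n) (n := 2 * N) (by
      intro k hk
      rw [intervalIntegrable_iff_integrableOn_Ioc_of_le (by push_cast; nlinarith)]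
      refine hint.mono_set (Set.Ioc_subset_Ioc (by positivity) ?_)
      rw [zero_add, hTN]
      have : ((k + 1 : ℕ) : ℝ) ≤ ((2 * N : ℕ) : ℝ) := by exact_mod_cast hk
      exact mul_le_mul_of_nonneg_left this hpi.le)
  rw [← AddCircle.intervalIntegral_preimage T 0, zero_add]
  have h' : ∫ a in (0:ℝ)..T, f a = ∫ x in (Real.pi * ((0:ℕ):ℝ))..(Real.pi * ((2 * N : ℕ) : ℝ)), f x := by
    rw [← hTN]; simp
  rw [h', ← h]
  refine Finset.sum_congr rfl fun n _ => ?_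
  rw [← integral_Ioc_eq_integral_Ioo, ← intervalIntegral.integral_of_le hpi.le,
    intervalIntegral.integral_comp_add_right (fun x : ℝ => f x)]
  congr 1 <;> push_cast <;> ring

/-- The map `U` defined by `(U h)_j(x) = (2N)^{-1/2} Σ_{n<2N} e^{-iπjn/N} h(x + πn)`
is a unitary from `L²(𝕋_N)` onto `⊕_{j<2N} L²(0,π)`: it is linear, isometric, and
surjective. -/
theorem direct_sum_decomposition_unitary (N : ℕ) (hN : 0 < N)
    [Fact ((0 : ℝ) < 2 * Real.pi * N)]
    (U : (AddCircle (2 * Real.pi * (N : ℝ)) → ℂ) → ℕ → ℝ → ℂ)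
    (hU : ∀ (h : AddCircle (2 * Real.pi * (N : ℝ)) → ℂ) (j : ℕ) (x : ℝ),
      U h j x = ((Real.sqrt (2 * N))⁻¹ : ℝ) *
        ∑ n ∈ Finset.range (2 * N),
          Complex.exp (-(Complex.I * (Real.pi : ℂ) * (j : ℂ) * (n : ℂ)) / (N : ℂ)) *
            h ((x + Real.pi * n : ℝ) : AddCircle (2 * Real.pi * (N : ℝ)))) :
    -- `U` is linear
    (∀ (c : ℂ) (h₁ h₂ : AddCircle (2 * Real.pi * (N : ℝ)) → ℂ) (j : ℕ) (x : ℝ),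
      U (c • h₁ + h₂) j x = c * U h₁ j x + U h₂ j x) ∧
    -- `U` is isometric from `L²(𝕋_N)` to `⊕_{j<2N} L²(0,π)`
    (∀ h : AddCircle (2 * Real.pi * (N : ℝ)) → ℂ, MemLp h 2 volume →
      (∀ j < 2 * N, MemLp (U h j) 2 (volume.restrict (Set.Ioo 0 Real.pi))) ∧
      ∑ j ∈ Finset.range (2 * N), ∫ x in Set.Ioo 0 Real.pi, ‖U h j x‖ ^ 2
        = ∫ y, ‖h y‖ ^ 2 ∂(volume : Measure (AddCircle (2 * Real.pi * (N : ℝ))))) ∧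
    -- `U` is surjective onto `⊕_{j<2N} L²(0,π)`
    (∀ G : ℕ → ℝ → ℂ,
      (∀ j < 2 * N, MemLp (G j) 2 (volume.restrict (Set.Ioo 0 Real.pi))) →
      ∃ h : AddCircle (2 * Real.pi * (N : ℝ)) → ℂ, MemLp h 2 volume ∧
        ∀ j < 2 * N, U h j =ᵐ[volume.restrict (Set.Ioo 0 Real.pi)] G j) := by
  have hpi := Real.pi_pos
  have hTN : 2 * Real.pi * (N : ℝ) = Real.pi * ((2 * N : ℕ) : ℝ) := by push_cast; ring
  have hsub : Set.Ioo 0 Real.pi ⊆ Set.Ioc 0 (0 + 2 * Real.pi * (N : ℝ)) := by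
    intro x hx
    have : (1 : ℝ) ≤ N := by exact_mod_cast hN
    exact ⟨hx.1, by nlinarith [hx.2]⟩
  refine ⟨?_, ?_, ?_⟩
  · intro c h₁ h₂ j x
    simp only [hU, Pi.add_apply, Pi.smul_apply, smul_eq_mul, Finset.mul_sum]
    rw [← Finset.sum_add_distrib]
    exact Finset.sum_congr rfl fun n _ => by ring
  · intro h hh
    have hsh : ∀ n : ℕ, MemLp (fun x : ℝ =>
        h ((x + Real.pi * n : ℝ) : AddCircle (2 * Real.pi * (N : ℝ)))) 2
        (volume.restrict (Set.Ioo 0 Real.pi)) := fun n =>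
      (hh.comp_measurePreserving (aux_mp (2 * Real.pi * (N : ℝ)) (Real.pi * n))).mono_measure
        (Measure.restrict_mono hsub le_rfl)
    have hmem : ∀ j : ℕ, MemLp (U h j) 2 (volume.restrict (Set.Ioo 0 Real.pi)) := by
      intro j
      have : U h j = fun x => _ := funext fun x => hU h j x
      rw [this]
      exact (memLp_finsetSum _ fun n _ => (hsh n).const_mul _).const_mul _
    refine ⟨fun j _ => hmem j, ?_⟩
    rw [aux_integral N _ hTN (fun y => ‖h y‖ ^ 2) ((memLp_two_iff_integrable_sq_norm hh.1).1 hh),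
      ← integral_finset_sum _ fun j _ => (memLp_two_iff_integrable_sq_norm (hmem j).1).1 (hmem j),
      ← integral_finset_sum _ fun j _ => (memLp_two_iff_integrable_sq_norm (hsh j).1).1 (hsh j)]
    congr 1
    funext x
    simp only [hU]
    exact aux_parseval N hN fun n =>
      h ((x + Real.pi * n : ℝ) : AddCircle (2 * Real.pi * (N : ℝ)))
  · intro G hG
    let V : ℕ → ℝ → ℂ := fun n x => ((Real.sqrt (2 * N))⁻¹ : ℝ) * ∑ k ∈ Finset.range (2 * N),
      (starRingEnd ℂ)
        (Complex.exp (-(Complex.I * (Real.pi : ℂ) * (k : ℂ) * (n : ℂ)) / (N : ℂ))) * G k x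
    let H : ℝ → ℂ := fun x => ∑ n ∈ Finset.range (2 * N),
      (Set.Ioo 0 Real.pi).indicator (V n) (x - Real.pi * n)
    have hV : ∀ n, MemLp (V n) 2 (volume.restrict (Set.Ioo 0 Real.pi)) := fun n =>
      (memLp_finsetSum _ fun k hk => (hG k (Finset.mem_range.1 hk)).const_mul _).const_mul _
    have hH : MemLp H 2 volume :=
      memLp_finsetSum _ fun n _ => ((memLp_indicator_iff_restrict measurableSet_Ioo).2
        (hV n)).comp_measurePreserving (measurePreserving_sub_right volume (Real.pi * n))
    refine ⟨AddCircle.liftIoc _ 0 H, aux_lift _ H hH, fun j hj => ?_⟩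
    filter_upwards [ae_restrict_mem measurableSet_Ioo] with x hx
    rw [hU, ← aux_inv N hN (fun k => G k x) j hj]
    congr 1
    refine Finset.sum_congr rfl fun n hn => ?_
    congr 1
    have hn' : (n : ℝ) + 1 ≤ ((2 * N : ℕ) : ℝ) := by exact_mod_cast Finset.mem_range.1 hn
    rw [AddCircle.liftIoc_coe_apply]
    · change H _ = V n x
      simp only [H]
      rw [Finset.sum_eq_single n]
      · rw [add_sub_cancel_right, Set.indicator_of_mem hx]
      · intro m _ hmn
        apply Set.indicator_of_notMem
        rintro ⟨h1, h2⟩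
        rcases lt_or_gt_of_ne hmn with h | h
        · have : (m : ℝ) + 1 ≤ n := by exact_mod_cast h
          nlinarith [hx.1]
        · have : (n : ℝ) + 1 ≤ m := by exact_mod_cast h
          nlinarith [hx.2]
      · exact fun h => absurd hn h
    · have hn0 : (0 : ℝ) ≤ n := n.cast_nonneg
      refine ⟨by nlinarith [hx.1], ?_⟩
      rw [zero_add, hTN]
      nlinarith [hx.2]
end

section
/- Let N be a positive integer, let 𝕋_N := ℝ/(2πN·ℤ) with Lebesgue measure, and let K : 𝕋_N × 𝕋_N → [0, ∞) be continuous with K(β + π, α + π) = K(β, α) for all β, α ∈ 𝕋_N. Let T be the integral operator on L²(𝕋_N) with kernel K, i.e., (T F)(β) = ∫_{𝕋_N} K(β, α)·F(α) dα, and let L₀ be the integral operator on L²((0, π)) with kernel L₀(β, α) = Σ_{n=0}^{2N−1} K(β, α + nπ). Then T and L₀ are bounded, and their operator norms coincide: ‖T‖_{L²(𝕋_N) → L²(𝕋_N)} = ‖L₀‖_{L²(0,π) → L²(0,π)}. -/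
open MeasureTheory

/-- bounded integral operators exist -/
lemma exists_kernel_op {X : Type*} [MeasurableSpace X] (ν : Measure X) [IsFiniteMeasure ν]
    (k : X → X → ℝ) (hk : StronglyMeasurable (Function.uncurry k)) (C : ℝ)
    (hC : ∀ x y, ‖k x y‖ ≤ C) :
    ∃ T : Lp ℝ 2 ν →L[ℝ] Lp ℝ 2 ν, ∀ F : Lp ℝ 2 ν, ∀ᵐ x ∂ν, (T F : X → ℝ) x = ∫ y, k x y * F y ∂ν := by
  have hkx : ∀ x, StronglyMeasurable (k x) := fun x => hk.comp_measurable measurable_prodMk_left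
  have hkm : ∀ x, MemLp (k x) 2 ν := fun x =>
    MemLp.of_bound (hkx x).aestronglyMeasurable C (Filter.Eventually.of_forall (hC x))
  have hint : ∀ x, ∀ F : Lp ℝ 2 ν, Integrable (fun y => k x y * F y) ν := fun x F =>
    (hkm x).integrable_mul (Lp.memLp F)
  have hinner : ∀ x, ∀ F : Lp ℝ 2 ν, ∫ y, k x y * F y ∂ν = inner ℝ ((hkm x).toLp (k x)) F := by
    intro x F
    rw [L2.inner_def]
    apply integral_congr_ae
    filter_upwards [(hkm x).coeFn_toLp] with y hy
    rw [hy]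
    simp [mul_comm]
  have hC0 : ∀ x : X, 0 ≤ C := fun x => (norm_nonneg _).trans (hC x x)
  have hbd : ∀ x, ∀ F : Lp ℝ 2 ν, ‖∫ y, k x y * F y ∂ν‖ ≤ (ν.real Set.univ) ^ ((2 : ENNReal).toReal⁻¹) * |C| * ‖F‖ := by
    intro x F
    rw [hinner]
    refine (norm_inner_le_norm _ _).trans ?_
    gcongr
    refine Lp.norm_le_of_ae_bound (abs_nonneg C) ?_
    filter_upwards [(hkm x).coeFn_toLp] with y hy
    rw [hy]
    exact (hC x y).trans (le_abs_self C)
  have hsm : ∀ F : Lp ℝ 2 ν, StronglyMeasurable (fun x => ∫ y, k x y * F y ∂ν) := by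
    intro F
    apply StronglyMeasurable.integral_prod_right
    exact hk.mul ((Lp.stronglyMeasurable F).comp_measurable measurable_snd)
  have hml : ∀ F : Lp ℝ 2 ν, MemLp (fun x => ∫ y, k x y * F y ∂ν) 2 ν := fun F =>
    MemLp.of_bound (hsm F).aestronglyMeasurable _ (Filter.Eventually.of_forall fun x => hbd x F)
  let A : Lp ℝ 2 ν →ₗ[ℝ] Lp ℝ 2 ν :=
    { toFun := fun F => (hml F).toLp _
      map_add' := by
        intro F G
        rw [← MemLp.toLp_add]
        apply MemLp.toLp_congr
        refine Filter.Eventually.of_forall fun x => ?_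
        simp only [Pi.add_apply, hinner, inner_add_right]
      map_smul' := by
        intro c F
        rw [RingHom.id_apply, ← MemLp.toLp_const_smul]
        apply MemLp.toLp_congr
        refine Filter.Eventually.of_forall fun x => ?_
        simp only [Pi.smul_apply, hinner, inner_smul_right, smul_eq_mul] }
  refine ⟨A.mkContinuous ((ν.real Set.univ) ^ ((2 : ENNReal).toReal⁻¹) * ((ν.real Set.univ) ^ ((2 : ENNReal).toReal⁻¹) * |C|)) ?_, ?_⟩
  · intro F
    rw [mul_assoc]
    refine Lp.norm_le_of_ae_bound (by positivity) ?_
    filter_upwards [(hml F).coeFn_toLp] with x hx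
    change ‖((hml F).toLp _ : X → ℝ) x‖ ≤ _
    rw [hx]
    exact hbd x F
  · intro F
    exact (hml F).coeFn_toLp

lemma l2_norm_sq {X : Type*} [MeasurableSpace X] {ν : Measure X} (F : Lp ℝ 2 ν) :
    ‖F‖ ^ 2 = ∫ x, (F x) ^ 2 ∂ν := by
  rw [← real_inner_self_eq_norm_sq, L2.inner_def]
  simp [sq]

section Abstract
set_option linter.unusedSectionVars false
variable {X Y ι : Type*} [MeasurableSpace X] [AddCommGroup X] [MeasurableSpace Y] [Fintype ι]
  [AddCommGroup ι] {ν : Measure X} {μ : Measure Y} {p : Y → X} {s : ι →+ X}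

lemma ae_fold (hp : ∀ n, Measurable fun a => p a + s n)
    (hν : ν = ∑ n, μ.map fun a => p a + s n) {P : X → Prop} (h : ∀ᵐ x ∂ν, P x) :
    ∀ᵐ a ∂μ, ∀ n, P (p a + s n) := by
  rw [ae_all_iff]
  intro n
  refine ae_of_ae_map (hp n).aemeasurable ?_
  have hle : (μ.map fun a => p a + s n) ≤ ν := by
    rw [hν, ← Measure.sum_fintype]
    exact Measure.le_sum (fun n => μ.map fun a => p a + s n) n
  exact ae_mono hle h

lemma integrable_fold (hp : ∀ n, Measurable fun a => p a + s n)
    (hν : ν = ∑ n, μ.map fun a => p a + s n) {f : X → ℝ} (hf : StronglyMeasurable f) :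
    Integrable f ν ↔ ∀ n, Integrable (fun a => f (p a + s n)) μ := by
  rw [hν, integrable_finsetSum_measure]
  simp only [Finset.mem_univ, forall_const]
  refine forall_congr' fun n => ?_
  exact integrable_map_measure hf.aestronglyMeasurable (hp n).aemeasurable

lemma integral_fold (hp : ∀ n, Measurable fun a => p a + s n)
    (hν : ν = ∑ n, μ.map fun a => p a + s n) {f : X → ℝ} (hf : StronglyMeasurable f)
    (hi : Integrable f ν) :
    ∫ x, f x ∂ν = ∫ a, ∑ n, f (p a + s n) ∂μ := by
  have hi' := (integrable_fold hp hν hf).1 hi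
  rw [integral_finsetSum _ (fun n _ => hi' n), hν, integral_finsetSum_measure]
  · refine Finset.sum_congr rfl fun n _ => ?_
    exact integral_map (hp n).aemeasurable hf.aestronglyMeasurable
  · intro n _
    exact (integrable_map_measure hf.aestronglyMeasurable (hp n).aemeasurable).2 (hi' n)

lemma kernel_fold {K : X → X → ℝ} (hper : ∀ x y n, K (x + s n) (y + s n) = K x y)
    (x y : X) (m n : ι) : K (x + s m) (y + s n) = K x (y + s (n - m)) := by
  rw [← hper x (y + s (n - m)) m, add_assoc, ← map_add, sub_add_cancel]

variable [IsFiniteMeasure ν] [IsFiniteMeasure μ]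

lemma op_fold (hp : ∀ n, Measurable fun a => p a + s n)
    (hν : ν = ∑ n, μ.map fun a => p a + s n)
    {K : X → X → ℝ} (hper : ∀ x y n, K (x + s n) (y + s n) = K x y)
    (hK : StronglyMeasurable (Function.uncurry K)) {C : ℝ} (hC : ∀ x y, ‖K x y‖ ≤ C)
    (F : Lp ℝ 2 ν) (b : Y) (m : ι) :
    (∀ n, Integrable (fun a => K (p b) (p a + s (n - m)) * F (p a + s n)) μ) ∧
    ∫ y, K (p b + s m) y * F y ∂ν
      = ∫ a, ∑ n, K (p b) (p a + s (n - m)) * F (p a + s n) ∂μ := by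
  have hsm : StronglyMeasurable fun y => K (p b + s m) y * F y :=
    (hK.comp_measurable measurable_prodMk_left).mul (Lp.stronglyMeasurable F)
  have hkm : MemLp (K (p b + s m)) 2 ν :=
    MemLp.of_bound (hK.comp_measurable measurable_prodMk_left).aestronglyMeasurable C
      (Filter.Eventually.of_forall (hC _))
  have hi : Integrable (fun y => K (p b + s m) y * F y) ν := hkm.integrable_mul (Lp.memLp F)
  have h1 := (integrable_fold hp hν hsm).1 hi
  have h2 := integral_fold hp hν hsm hi
  simp only [kernel_fold hper] at h1 h2
  exact ⟨h1, h2⟩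

lemma norm_sq_fold (hp : ∀ n, Measurable fun a => p a + s n)
    (hν : ν = ∑ n, μ.map fun a => p a + s n) (F : Lp ℝ 2 ν) :
    (∀ n, Integrable (fun a => (F (p a + s n)) ^ 2) μ) ∧
    ‖F‖ ^ 2 = ∫ a, ∑ n, (F (p a + s n)) ^ 2 ∂μ := by
  have hsm : StronglyMeasurable fun y => (F y) ^ 2 := (Lp.stronglyMeasurable F).pow 2
  have hi := (Lp.memLp F).integrable_sq
  exact ⟨(integrable_fold hp hν hsm).1 hi, by rw [l2_norm_sq, integral_fold hp hν hsm hi]⟩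

lemma L_le_T (hp : ∀ n, Measurable fun a => p a + s n)
    (hν : ν = ∑ n, μ.map fun a => p a + s n)
    {K : X → X → ℝ} (hper : ∀ x y n, K (x + s n) (y + s n) = K x y)
    (hK : StronglyMeasurable (Function.uncurry K)) {C : ℝ} (hC : ∀ x y, ‖K x y‖ ≤ C)
    (hE : ∀ G : Y → ℝ, Measurable G → ∃ F : X → ℝ, Measurable F ∧
      ∀ᵐ a ∂μ, ∀ n, F (p a + s n) = G a)
    (T : Lp ℝ 2 ν →L[ℝ] Lp ℝ 2 ν) (L : Lp ℝ 2 μ →L[ℝ] Lp ℝ 2 μ)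
    (hT : ∀ F : Lp ℝ 2 ν, ∀ᵐ x ∂ν, (T F : X → ℝ) x = ∫ y, K x y * F y ∂ν)
    (hL : ∀ G : Lp ℝ 2 μ, ∀ᵐ b ∂μ, (L G : Y → ℝ) b
      = ∫ a, (∑ n, K (p b) (p a + s n)) * G a ∂μ) : ‖L‖ ≤ ‖T‖ := by
  refine L.opNorm_le_bound (norm_nonneg _) fun G => ?_
  obtain ⟨F₀, hFm, hF⟩ := hE G (Lp.stronglyMeasurable G).measurable
  have hmem : MemLp F₀ 2 ν := by
    rw [memLp_two_iff_integrable_sq hFm.aestronglyMeasurable,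
      integrable_fold hp hν (hFm.pow_const 2).stronglyMeasurable]
    intro n
    refine (Lp.memLp G).integrable_sq.congr ?_
    filter_upwards [hF] with a ha
    rw [ha n]
  set F : Lp ℝ 2 ν := hmem.toLp F₀ with hFdef
  have hFF : ∀ᵐ a ∂μ, ∀ n, F (p a + s n) = G a := by
    filter_upwards [hF, ae_fold hp hν hmem.coeFn_toLp] with a h1 h2 n
    rw [← h1 n, ← h2 n]
  have hTF : ∀ᵐ b ∂μ, ∀ m, (T F) (p b + s m) = L G b := by
    filter_upwards [ae_fold hp hν (hT F), hL G] with b h1 h2 m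
    rw [h1 m, h2, (op_fold hp hν hper hK hC F b m).2]
    apply integral_congr_ae
    filter_upwards [hFF] with a ha
    simp only [ha]
    rw [← Finset.sum_mul]
    congr 1
    exact (Equiv.subRight m).sum_comp fun n => K (p b) (p a + s n)
  have e1 : ‖F‖ ^ 2 = (Fintype.card ι : ℝ) * ‖G‖ ^ 2 := by
    rw [(norm_sq_fold hp hν F).2, l2_norm_sq, ← integral_const_mul]
    apply integral_congr_ae
    filter_upwards [hFF] with a ha
    simp [ha]
  have e2 : ‖T F‖ ^ 2 = (Fintype.card ι : ℝ) * ‖L G‖ ^ 2 := by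
    rw [(norm_sq_fold hp hν (T F)).2, l2_norm_sq, ← integral_const_mul]
    apply integral_congr_ae
    filter_upwards [hTF] with a ha
    simp [ha]
  have hc : (0 : ℝ) < Fintype.card ι := by exact_mod_cast Fintype.card_pos
  have h3 : ‖T F‖ ^ 2 ≤ (‖T‖ * ‖F‖) ^ 2 := by gcongr; exact T.le_opNorm F
  rw [e2, mul_pow, e1] at h3
  refine le_of_sq_le_sq ?_ (by positivity)
  have h4 : (Fintype.card ι : ℝ) * ‖L G‖ ^ 2 ≤ (Fintype.card ι : ℝ) * (‖T‖ * ‖G‖) ^ 2 := by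
    linarith [h3, show (Fintype.card ι : ℝ) * (‖T‖ * ‖G‖) ^ 2
      = ‖T‖ ^ 2 * ((Fintype.card ι : ℝ) * ‖G‖ ^ 2) by ring]
  exact le_of_mul_le_mul_left h4 hc

lemma T_le_L (hp : ∀ n, Measurable fun a => p a + s n)
    (hν : ν = ∑ n, μ.map fun a => p a + s n)
    {K : X → X → ℝ} (hper : ∀ x y n, K (x + s n) (y + s n) = K x y) (hK0 : ∀ x y, 0 ≤ K x y)
    (hK : StronglyMeasurable (Function.uncurry K)) {C : ℝ} (hC : ∀ x y, ‖K x y‖ ≤ C)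
    (T : Lp ℝ 2 ν →L[ℝ] Lp ℝ 2 ν) (L : Lp ℝ 2 μ →L[ℝ] Lp ℝ 2 μ)
    (hT : ∀ F : Lp ℝ 2 ν, ∀ᵐ x ∂ν, (T F : X → ℝ) x = ∫ y, K x y * F y ∂ν)
    (hL : ∀ G : Lp ℝ 2 μ, ∀ᵐ b ∂μ, (L G : Y → ℝ) b
      = ∫ a, (∑ n, K (p b) (p a + s n)) * G a ∂μ) : ‖T‖ ≤ ‖L‖ := by
  refine T.opNorm_le_bound (norm_nonneg _) fun F => ?_
  have hFm : Measurable F := (Lp.stronglyMeasurable F).measurable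
  set g : Y → ℝ := fun a => √(∑ n, (F (p a + s n)) ^ 2) with hg
  have hgsq : ∀ a, g a ^ 2 = ∑ n, (F (p a + s n)) ^ 2 := fun a =>
    Real.sq_sqrt (Finset.sum_nonneg fun n _ => sq_nonneg _)
  have hgm : Measurable g := by
    refine (Finset.measurable_sum _ fun n _ => ?_).sqrt
    exact (hFm.comp (hp n)).pow_const 2
  obtain ⟨hFi, hFn⟩ := norm_sq_fold hp hν F
  have hmem : MemLp g 2 μ := by
    rw [memLp_two_iff_integrable_sq hgm.aestronglyMeasurable]
    simp only [hgsq]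
    exact integrable_finsetSum _ fun n _ => hFi n
  set G : Lp ℝ 2 μ := hmem.toLp g with hG
  have hGg : ∀ᵐ a ∂μ, G a = g a := hmem.coeFn_toLp
  have hGn : ‖G‖ = ‖F‖ := by
    have : ‖G‖ ^ 2 = ‖F‖ ^ 2 := by
      rw [hFn, l2_norm_sq]
      apply integral_congr_ae
      filter_upwards [hGg] with a ha
      rw [ha, hgsq]
    exact (sq_eq_sq₀ (norm_nonneg _) (norm_nonneg _)).1 this
  obtain ⟨hTi, hTn⟩ := norm_sq_fold hp hν (T F)
  have key : ∀ᵐ b ∂μ, ∑ m, ((T F) (p b + s m)) ^ 2 ≤ (L G b) ^ 2 := by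
    filter_upwards [ae_fold hp hν (hT F), hL G] with b h1 h2
    -- vector-valued integrand
    let V : Y → EuclideanSpace ℝ ι := fun a =>
      WithLp.toLp 2 fun m => ∑ n, K (p b) (p a + s (n - m)) * F (p a + s n)
    have hVi : Integrable V μ := by
      rw [integrable_piLp_iff]
      intro m
      exact integrable_finsetSum _ fun n _ => (op_fold hp hν hper hK hC F b m).1 n
    have hVc : ∀ m, (∫ a, V a ∂μ) m = (T F) (p b + s m) := by
      intro m
      rw [h1 m, (op_fold hp hν hper hK hC F b m).2]
      exact ((EuclideanSpace.proj (𝕜 := ℝ) m).integral_comp_comm hVi).symm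
    have hVn : ∀ a, ‖V a‖ ≤ (∑ n, K (p b) (p a + s n)) * g a := by
      intro a
      let W : ι → EuclideanSpace ℝ ι := fun k => WithLp.toLp 2 fun m => F (p a + s (k + m))
      have hV : V a = ∑ k, K (p b) (p a + s k) • W k := by
        ext m
        simp only [V, W, WithLp.ofLp_sum, Finset.sum_apply, PiLp.smul_apply,
          smul_eq_mul]
        rw [← Equiv.sum_comp (Equiv.addRight m)]
        simp
      rw [hV, Finset.sum_mul]
      refine (norm_sum_le _ _).trans (Finset.sum_le_sum fun k _ => ?_)
      rw [norm_smul, Real.norm_of_nonneg (hK0 _ _)]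
      refine mul_le_mul_of_nonneg_left (le_of_eq ?_) (hK0 _ _)
      rw [EuclideanSpace.norm_eq, hg]
      congr 1
      simp only [W, Real.norm_eq_abs, sq_abs]
      exact Equiv.sum_comp (Equiv.addLeft k) fun n => (F (p a + s n)) ^ 2
    have hle : ‖∫ a, V a ∂μ‖ ≤ L G b := by
      rw [h2]
      have : ∫ a, (∑ n, K (p b) (p a + s n)) * G a ∂μ
          = ∫ a, (∑ n, K (p b) (p a + s n)) * g a ∂μ := by
        apply integral_congr_ae
        filter_upwards [hGg] with a ha
        rw [ha]
      rw [this]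
      refine norm_integral_le_of_norm_le ?_ (Filter.Eventually.of_forall hVn)
      have hkm : MemLp (fun a => ∑ n, K (p b) (p a + s n)) 2 μ := by
        refine memLp_finsetSum _ fun n _ => ?_
        refine MemLp.of_bound ?_ C (Filter.Eventually.of_forall fun a => hC _ _)
        exact ((hK.comp_measurable measurable_prodMk_left).comp_measurable
          (hp n)).aestronglyMeasurable
      exact hkm.integrable_mul hmem
    calc ∑ m, ((T F) (p b + s m)) ^ 2 = ‖∫ a, V a ∂μ‖ ^ 2 := by
          rw [EuclideanSpace.real_norm_sq_eq]
          exact Finset.sum_congr rfl fun m _ => by rw [hVc]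
      _ ≤ _ := by gcongr
  have h3 : ‖T F‖ ^ 2 ≤ ‖L G‖ ^ 2 := by
    rw [hTn, l2_norm_sq]
    exact integral_mono_ae (integrable_finsetSum _ fun n _ => hTi n)
      (Lp.memLp (L G)).integrable_sq key
  have h4 : ‖T F‖ ≤ ‖L G‖ := le_of_sq_le_sq h3 (norm_nonneg _)
  rw [← hGn]
  exact h4.trans (L.le_opNorm G)

end Abstract

lemma sum_zmod (M : ℕ) [NeZero M] {A : Type*} [AddCommMonoid A] (f : ZMod M → A) :
    ∑ n, f n = ∑ n ∈ Finset.range M, f (n : ZMod M) := by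
  symm
  refine Finset.sum_nbij' (fun n => (n : ZMod M)) ZMod.val ?_ ?_ ?_ ?_ ?_
  · intro n _; exact Finset.mem_univ _
  · intro n _; exact Finset.mem_range.2 (ZMod.val_lt n)
  · intro n hn; exact ZMod.val_cast_of_lt (Finset.mem_range.1 hn)
  · intro n _; exact ZMod.natCast_zmod_val n
  · intro n _; rfl

lemma restrict_Ioc_sum (M : ℕ) :
    (volume : Measure ℝ).restrict (Set.Ioc 0 ((M : ℝ) * Real.pi)) =
      ∑ n ∈ Finset.range M, (volume.restrict (Set.Ioo (0 : ℝ) Real.pi)).map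
        (fun a => a + (n : ℝ) * Real.pi) := by
  have hpi := Real.pi_pos
  induction M with
  | zero => simp
  | succ k ih =>
    have hk : (0 : ℝ) ≤ k * Real.pi := by positivity
    rw [Finset.sum_range_succ, ← ih, ← Set.Ioc_union_Ioc_eq_Ioc (b := (k : ℝ) * Real.pi) hk
      (by push_cast; nlinarith), Measure.restrict_union _ measurableSet_Ioc]
    · congr 1
      have h := ((measurePreserving_add_right (volume : Measure ℝ)
        ((k : ℝ) * Real.pi)).restrict_preimage
        (measurableSet_Ioc (a := (k : ℝ) * Real.pi) (b := ((k + 1 : ℕ) : ℝ) * Real.pi))).map_eq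
      rw [← h, Set.preimage_add_const_Ioc, Measure.restrict_congr_set Ioo_ae_eq_Ioc]
      congr 4
      · ring
      · push_cast; ring
    · rw [Set.disjoint_left]
      intro x h1 h2
      exact absurd h1.2 (not_le.2 h2.1)

/-- For a continuous nonnegative kernel `K` on `𝕋_N × 𝕋_N` with `K(β+π, α+π) = K(β,α)`,
the integral operator `T` on `L²(𝕋_N)` with kernel `K` and the integral operator `L₀`
on `L²(0,π)` with kernel `L₀(β,α) = Σ_{n<2N} K(β, α + nπ)` are bounded and have equal
operator norms. -/
theorem kernel_operator_norm_eq (N : ℕ) (hN : 0 < N)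
    [Fact ((0 : ℝ) < 2 * Real.pi * N)]
    (K : AddCircle (2 * Real.pi * (N : ℝ)) × AddCircle (2 * Real.pi * (N : ℝ)) → ℝ)
    (hKc : Continuous K) (hK0 : ∀ p, 0 ≤ K p)
    (hKper : ∀ β α : AddCircle (2 * Real.pi * (N : ℝ)),
      K (β + ((Real.pi : ℝ) : AddCircle (2 * Real.pi * (N : ℝ))),
         α + ((Real.pi : ℝ) : AddCircle (2 * Real.pi * (N : ℝ)))) = K (β, α)) :
    ∃ (T : Lp ℝ 2 (volume : Measure (AddCircle (2 * Real.pi * (N : ℝ)))) →L[ℝ]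
           Lp ℝ 2 (volume : Measure (AddCircle (2 * Real.pi * (N : ℝ)))))
      (L₀ : Lp ℝ 2 (volume.restrict (Set.Ioo (0 : ℝ) Real.pi)) →L[ℝ]
            Lp ℝ 2 (volume.restrict (Set.Ioo (0 : ℝ) Real.pi))),
      (∀ F : Lp ℝ 2 (volume : Measure (AddCircle (2 * Real.pi * (N : ℝ)))),
        ∀ᵐ β ∂(volume : Measure (AddCircle (2 * Real.pi * (N : ℝ)))),
          (T F : AddCircle (2 * Real.pi * (N : ℝ)) → ℝ) β
            = ∫ α, K (β, α) * F α
                ∂(volume : Measure (AddCircle (2 * Real.pi * (N : ℝ))))) ∧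
      (∀ G : Lp ℝ 2 (volume.restrict (Set.Ioo (0 : ℝ) Real.pi)),
        ∀ᵐ β ∂(volume.restrict (Set.Ioo (0 : ℝ) Real.pi)),
          (L₀ G : ℝ → ℝ) β
            = ∫ α in Set.Ioo (0 : ℝ) Real.pi,
                (∑ n ∈ Finset.range (2 * N),
                  K (((β : ℝ) : AddCircle (2 * Real.pi * (N : ℝ))),
                     ((α + n * Real.pi : ℝ) : AddCircle (2 * Real.pi * (N : ℝ)))))
                  * G α) ∧
      ‖T‖ = ‖L₀‖ := by
  have : NeZero (2 * N) := ⟨by omega⟩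
  have hP : 2 * Real.pi * (N : ℝ) = ((2 * N : ℕ) : ℝ) * Real.pi := by push_cast; ring
  have hs0 : zmultiplesHom (AddCircle (2 * Real.pi * (N : ℝ)))
      ((Real.pi : ℝ) : AddCircle (2 * Real.pi * (N : ℝ))) ((2 * N : ℕ) : ℤ) = 0 := by
    rw [zmultiplesHom_apply, natCast_zsmul, ← AddCircle.coe_nsmul, nsmul_eq_mul, ← hP]
    exact AddCircle.coe_period _
  set s : ZMod (2 * N) →+ AddCircle (2 * Real.pi * (N : ℝ)) := ZMod.lift (2 * N) ⟨_, hs0⟩ with hs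
  have hsn : ∀ n : ℕ, s (n : ZMod (2 * N)) = ((n * Real.pi : ℝ) : AddCircle (2 * Real.pi * (N : ℝ))) := by
    intro n
    have h := ZMod.lift_coe (2 * N) ⟨_, hs0⟩ (n : ℤ)
    rw [Int.cast_natCast] at h
    rw [hs, h]
    simp only [zmultiplesHom_apply, natCast_zsmul]
    rw [← AddCircle.coe_nsmul, nsmul_eq_mul]
  have hsum : ∀ {A : Type} [AddCommMonoid A] (f : ZMod (2 * N) → A),
      ∑ n, f n = ∑ n ∈ Finset.range (2 * N), f (n : ZMod (2 * N)) := fun f => sum_zmod _ f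
  have hp : ∀ n, Measurable fun a : ℝ => (a : AddCircle (2 * Real.pi * (N : ℝ))) + s n := fun n =>
    ((AddCircle.continuous_mk' _).add continuous_const).measurable
  have hν : (volume : Measure (AddCircle (2 * Real.pi * (N : ℝ)))) =
      ∑ n, (volume.restrict (Set.Ioo (0 : ℝ) Real.pi)).map
        fun a : ℝ => (a : AddCircle (2 * Real.pi * (N : ℝ))) + s n := by
    rw [hsum]
    have h := (AddCircle.measurePreserving_mk (2 * Real.pi * (N : ℝ)) 0).map_eq
    have hmk : Measurable (QuotientAddGroup.mk : ℝ → AddCircle (2 * Real.pi * (N : ℝ))) :=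
      (AddCircle.continuous_mk' _).measurable
    have hI : Set.Ioc (0 : ℝ) (2 * Real.pi * (N : ℝ))
        = Set.Ioc 0 (((2 * N : ℕ) : ℝ) * Real.pi) := by rw [hP]
    rw [zero_add, hI, restrict_Ioc_sum, Measure.map_finset_sum hmk.aemeasurable] at h
    rw [← h]
    refine Finset.sum_congr rfl fun n _ => ?_
    rw [Measure.map_map hmk (measurable_add_const ((n : ℝ) * Real.pi))]
    congr 1
    funext a
    rw [hsn]
    rfl
  have hper : ∀ x y n, K (x + s n, y + s n) = K (x, y) := by
    have hnat : ∀ n : ℕ, ∀ x y, K (x + s (n : ZMod (2 * N)), y + s (n : ZMod (2 * N))) = K (x, y) := by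
      intro n
      induction n with
      | zero => intro x y; simp
      | succ k ih =>
        intro x y
        have h1 : s ((1 : ℕ) : ZMod (2 * N)) = ((Real.pi : ℝ) : AddCircle (2 * Real.pi * (N : ℝ))) := by
          rw [hsn]; simp
        have h2 : s ((k + 1 : ℕ) : ZMod (2 * N)) = s (k : ZMod (2 * N))
            + ((Real.pi : ℝ) : AddCircle (2 * Real.pi * (N : ℝ))) := by
          rw [← h1, ← map_add, Nat.cast_add]
        rw [h2, ← add_assoc, ← add_assoc, hKper, ih]
    intro x y n
    have := hnat n.val x y
    rwa [ZMod.natCast_zmod_val] at this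
  obtain ⟨C, hC⟩ : ∃ C, ∀ q, ‖K q‖ ≤ C := by
    obtain ⟨C, hC⟩ := isCompact_univ.exists_bound_of_continuousOn hKc.continuousOn
    exact ⟨C, fun q => hC q (Set.mem_univ q)⟩
  have hE : ∀ G : ℝ → ℝ, Measurable G → ∃ F : AddCircle (2 * Real.pi * (N : ℝ)) → ℝ, Measurable F ∧
      ∀ᵐ a : ℝ ∂(volume.restrict (Set.Ioo (0 : ℝ) Real.pi)), ∀ n,
        F ((a : AddCircle (2 * Real.pi * (N : ℝ))) + s n) = G a := by
    intro G hG
    let E : AddCircle (2 * Real.pi * (N : ℝ)) → ℝ := fun y =>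
      (Set.Ioo (0 : ℝ) Real.pi).indicator G
        (AddCircle.measurableEquivIoc (2 * Real.pi * (N : ℝ)) 0 y : ℝ)
    have hEm : Measurable E := (hG.indicator measurableSet_Ioo).comp
      (measurable_subtype_coe.comp (AddCircle.measurableEquivIoc _ 0).measurable)
    have hEv : ∀ a ∈ Set.Ioo (0 : ℝ) Real.pi, ∀ j : ZMod (2 * N),
        E ((a : AddCircle (2 * Real.pi * (N : ℝ))) + s j) = if j = 0 then G a else 0 := by
      intro a ha j
      have hlt : ((j.val : ℝ) + 1) ≤ ((2 * N : ℕ) : ℝ) := by exact_mod_cast ZMod.val_lt j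
      have hj0 : (0 : ℝ) ≤ j.val := Nat.cast_nonneg _
      have hpi := Real.pi_pos
      have hmem : a + j.val * Real.pi ∈ Set.Ioc (0 : ℝ) (0 + 2 * Real.pi * (N : ℝ)) := by
        rw [hP]
        exact ⟨by nlinarith [ha.1], by nlinarith [ha.2]⟩
      have hval : (AddCircle.measurableEquivIoc (2 * Real.pi * (N : ℝ)) 0
          ((a : AddCircle (2 * Real.pi * (N : ℝ))) + s j) : ℝ) = a + j.val * Real.pi := by
        have e : (a : AddCircle (2 * Real.pi * (N : ℝ))) + s j
            = ((a + j.val * Real.pi : ℝ) : AddCircle (2 * Real.pi * (N : ℝ))) := by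
          rw [AddCircle.coe_add, ← hsn, ZMod.natCast_zmod_val]
        rw [e]
        exact congrArg Subtype.val (AddCircle.equivIoc_coe_eq hmem)
      simp only [E, hval]
      split_ifs with hj
      · subst hj
        simp [ha.1, ha.2]
      · apply Set.indicator_of_notMem
        intro hh
        have : (1 : ℝ) ≤ j.val := by
          exact_mod_cast Nat.one_le_iff_ne_zero.2 fun h => hj ((ZMod.val_eq_zero j).1 h)
        nlinarith [hh.2, ha.1]
    refine ⟨fun x => ∑ n, E (x - s n), ?_, ?_⟩
    · exact Finset.measurable_sum _ fun n _ => hEm.comp (measurable_id.sub_const _)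
    · filter_upwards [ae_restrict_mem measurableSet_Ioo] with a ha m
      have : ∀ n, E ((a : AddCircle (2 * Real.pi * (N : ℝ))) + s m - s n)
          = if m = n then G a else 0 := by
        intro n
        rw [add_sub_assoc, ← map_sub, hEv a ha]
        simp [sub_eq_zero]
      simp [this]
  have hKm : StronglyMeasurable (Function.uncurry fun x y => K (x, y)) := hKc.stronglyMeasurable
  obtain ⟨T, hT⟩ := exists_kernel_op (volume : Measure (AddCircle (2 * Real.pi * (N : ℝ))))
    (fun x y => K (x, y)) hKm C (fun x y => hC _)
  obtain ⟨L, hL⟩ := exists_kernel_op (volume.restrict (Set.Ioo (0 : ℝ) Real.pi))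
    (fun b a => ∑ n ∈ Finset.range (2 * N), K ((b : AddCircle (2 * Real.pi * (N : ℝ))),
      ((a + n * Real.pi : ℝ) : AddCircle (2 * Real.pi * (N : ℝ)))))
    (by
      apply Continuous.stronglyMeasurable
      refine continuous_finsetSum _ fun n _ => hKc.comp ?_
      exact ((AddCircle.continuous_mk' _).comp continuous_fst).prodMk
        ((AddCircle.continuous_mk' _).comp (continuous_snd.add continuous_const)))
    (∑ n ∈ Finset.range (2 * N), C)
    (fun x y => (norm_sum_le _ _).trans (Finset.sum_le_sum fun n _ => hC _))
  refine ⟨T, L, hT, hL, ?_⟩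
  have hL' : ∀ G : Lp ℝ 2 (volume.restrict (Set.Ioo (0 : ℝ) Real.pi)),
      ∀ᵐ b ∂(volume.restrict (Set.Ioo (0 : ℝ) Real.pi)), (L G : ℝ → ℝ) b
      = ∫ a in Set.Ioo (0 : ℝ) Real.pi, (∑ n, K ((b : AddCircle (2 * Real.pi * (N : ℝ))),
        (a : AddCircle (2 * Real.pi * (N : ℝ))) + s n)) * G a := by
    intro G
    filter_upwards [hL G] with b hb
    rw [hb]
    congr 1
    funext a
    rw [hsum]
    simp only [hsn, AddCircle.coe_add]
  apply le_antisymm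
  · exact T_le_L (K := fun x y => K (x, y)) hp hν hper (fun _ _ => hK0 _) hKm (fun _ _ => hC _)
      T L hT hL'
  · exact L_le_T (K := fun x y => K (x, y)) hp hν hper hKm (fun _ _ => hC _) hE T L hT hL'
end
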